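/- arXiv:2005.00729 — 4 statements merged into one kernel-verified Lean document; each statement's English description precedes it below -/
import Mathlib

section
/- Let T : V → g be a relative Rota-Baxter operator on a Leibniz algebra (g,[·,·]_g) with respect to a representation (V; ρL, ρR). Then the bilinear operation [u,v]_T := ρL(Tu)v + ρR(Tv)u defines a Leibniz algebra structure on V; that is, for all u,v,w ∈ V one has [u,[v,w]_T]_T = [[u,v]_T,w]_T + [v,[u,w]_T]_T. -/
/-!
The axioms of a representation say that the Leibniz identity holds in the semidirect product
`g ⋉ V` whenever exactly one of the three arguments lies in `V`; there is one identity for each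
position of that argument. Since `T [v, w]_T = [T v, T w]`, expanding `[u, [v, w]_T]_T` yields three
terms, in which respectively `w`, `v` and `u` is the argument in `V` and the other two are replaced
by their images under `T`. The three identities add up to the Leibniz identity for `[·, ·]_T`.
-/

/-- The left Leibniz identity for a binary operation, which makes a bilinear `b` the bracket of a
Leibniz algebra; `b` is unbundled, and this predicate records the identity alone. -/
def IsLeftLeibniz {A : Type*} [Add A] (b : A → A → A) : Prop :=
  ∀ x y z, b x (b y z) = b (b x y) z + b y (b x z)

section Representation

variable {R g V : Type*} [Semiring R] [AddCommGroup V] [Module R V]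
  {br : g → g → g} {ρL ρR : g → Module.End R V} {T : V → g}

/-- The identities required of the left and right actions `ρL`, `ρR` on `V` in a representation
`(V; ρL, ρR)` of a Leibniz algebra with bracket `br`. The maps `br`, `ρL` and `ρR` are unbundled:
they are functions on `g`, and this predicate records the identities alone. -/
structure IsLeibnizRepresentation (br : g → g → g) (ρL ρR : g → Module.End R V) : Prop where
  left_bracket : ∀ x y, ρL (br x y) = ρL x * ρL y - ρL y * ρL x
  right_bracket : ∀ x y, ρR (br x y) = ρL x * ρR y - ρR y * ρL x
  right_mul_left : ∀ x y, ρR y * ρL x = -(ρR y * ρR x)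

/-- The operation `[u, v]_T = ρL (T u) v + ρR (T v) u` that `T : V → g` induces on `V`. -/
def inducedBracket (ρL ρR : g → Module.End R V) (T : V → g) (u v : V) : V :=
  ρL (T u) v + ρR (T v) u

/-- The identity `[T u, T v] = T [u, v]_T` defining relative Rota-Baxter operators; as in
`IsLeibnizRepresentation`, the maps are unbundled. -/
def IsRelativeRotaBaxter (br : g → g → g) (ρL ρR : g → Module.End R V) (T : V → g) : Prop :=
  ∀ u v, br (T u) (T v) = T (inducedBracket ρL ρR T u v)

namespace IsLeibnizRepresentation

theorem left_left_apply (h : IsLeibnizRepresentation br ρL ρR) (x y : g) (w : V) :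
    ρL x (ρL y w) = ρL (br x y) w + ρL y (ρL x w) := by
  simp only [h.left_bracket, LinearMap.sub_apply, Module.End.mul_apply, sub_add_cancel]

theorem left_right_apply (h : IsLeibnizRepresentation br ρL ρR) (x z : g) (v : V) :
    ρL x (ρR z v) = ρR z (ρL x v) + ρR (br x z) v := by
  simp only [h.right_bracket, LinearMap.sub_apply, Module.End.mul_apply, add_sub_cancel]

theorem right_bracket_apply (h : IsLeibnizRepresentation br ρL ρR) (y z : g) (u : V) :
    ρR (br y z) u = ρR z (ρR y u) + ρL y (ρR z u) := by
  have right_left : ρR z (ρL y u) = -ρR z (ρR y u) :=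
    LinearMap.congr_fun (h.right_mul_left y z) u
  rw [h.left_right_apply y z u, right_left, add_neg_cancel_left]

end IsLeibnizRepresentation

namespace IsRelativeRotaBaxter

theorem inducedBracket_inducedBracket_right (hT : IsRelativeRotaBaxter br ρL ρR T) (u v w : V) :
    inducedBracket ρL ρR T u (inducedBracket ρL ρR T v w) =
      ρL (T u) (ρL (T v) w) + ρL (T u) (ρR (T w) v) + ρR (br (T v) (T w)) u := by
  rw [inducedBracket, ← hT, inducedBracket, map_add]

theorem inducedBracket_inducedBracket_left (hT : IsRelativeRotaBaxter br ρL ρR T) (u v w : V) :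
    inducedBracket ρL ρR T (inducedBracket ρL ρR T u v) w =
      ρL (br (T u) (T v)) w + (ρR (T w) (ρL (T u) v) + ρR (T w) (ρR (T v) u)) := by
  rw [inducedBracket, ← hT, inducedBracket, map_add]

end IsRelativeRotaBaxter

theorem leibniz_bracket_of_relative_rota_baxter_general
    (hρ : IsLeibnizRepresentation br ρL ρR) (hT : IsRelativeRotaBaxter br ρL ρR T) :
    IsLeftLeibniz (inducedBracket ρL ρR T) := by
  intro u v w
  calc
    inducedBracket ρL ρR T u (inducedBracket ρL ρR T v w)
    _ = ρL (T u) (ρL (T v) w) + ρL (T u) (ρR (T w) v) + ρR (br (T v) (T w)) u :=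
      hT.inducedBracket_inducedBracket_right u v w
    _ = (ρL (br (T u) (T v)) w + ρL (T v) (ρL (T u) w)) +
          (ρR (T w) (ρL (T u) v) + ρR (br (T u) (T w)) v) +
          (ρR (T w) (ρR (T v) u) + ρL (T v) (ρR (T w) u)) := by
      rw [hρ.left_left_apply, hρ.left_right_apply, hρ.right_bracket_apply (T v)]
    _ = (ρL (br (T u) (T v)) w + (ρR (T w) (ρL (T u) v) + ρR (T w) (ρR (T v) u))) +
          (ρL (T v) (ρL (T u) w) + ρL (T v) (ρR (T w) u) + ρR (br (T u) (T w)) v) := by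
      abel
    _ = inducedBracket ρL ρR T (inducedBracket ρL ρR T u v) w +
          inducedBracket ρL ρR T v (inducedBracket ρL ρR T u w) := by
      rw [hT.inducedBracket_inducedBracket_left, hT.inducedBracket_inducedBracket_right v u w]

end Representation

/-- If `T` is a relative Rota-Baxter operator on a Leibniz algebra `g` with
respect to a representation `(V; ρL, ρR)`, then `[u,v]_T := ρL(Tu)v + ρR(Tv)u` defines a
Leibniz algebra structure on `V`. -/
theorem leibniz_bracket_of_relative_rota_baxter
    {K : Type*} [Field K] [CharZero K]
    {g V : Type*} [AddCommGroup g] [Module K g] [AddCommGroup V] [Module K V]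
    (br : g →ₗ[K] g →ₗ[K] g)
    (leib : ∀ x y z : g, br x (br y z) = br (br x y) z + br y (br x z))
    (ρL ρR : g →ₗ[K] Module.End K V)
    (hL : ∀ x y : g, ρL (br x y) = ρL x * ρL y - ρL y * ρL x)
    (hR : ∀ x y : g, ρR (br x y) = ρL x * ρR y - ρR y * ρL x)
    (hRL : ∀ x y : g, ρR y * ρL x = -(ρR y * ρR x))
    (T : V →ₗ[K] g)
    (hT : ∀ u v : V, br (T u) (T v) = T (ρL (T u) v + ρR (T v) u))
    (bT : V → V → V)
    (hbT : ∀ u v : V, bT u v = ρL (T u) v + ρR (T v) u) :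
    ∀ u v w : V, bT u (bT v w) = bT (bT u v) w + bT v (bT u w) := by
  obtain rfl : bT = inducedBracket ρL ρR T := funext₂ hbT
  exact leibniz_bracket_of_relative_rota_baxter_general (br := fun x y => br x y) ⟨hL, hR, hRL⟩ hT
end

section
/- Let T : V → g be a relative Rota-Baxter operator on a Leibniz algebra (g,[·,·]_g) with respect to a representation (V; ρL, ρR), and let 𝔗 : V → g be a linear map. Then T_t = T + t𝔗 is a relative Rota-Baxter operator for every t ∈ K if and only if for all u,v ∈ V both of the following hold: (14) [Tu,𝔗v]_g + [𝔗u,Tv]_g = T(ρL(𝔗u)v + ρR(𝔗v)u) + 𝔗(ρL(Tu)v + ρR(Tv)u), and (15) [𝔗u,𝔗v]_g = 𝔗(ρL(𝔗u)v + ρR(𝔗v)u). -/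
/-!
The defect `[Tu, Tv] - T(ρL(Tu)v + ρR(Tv)u)` of the relative Rota-Baxter identity is quadratic in
`T`. Along the line `T + t𝔗` it is therefore a polynomial of degree two in `t`, whose constant
coefficient vanishes with the defect of `T`, whose linear coefficient (the polar form) is the
defect of (14) and whose quadratic coefficient is the defect of (15). Such a polynomial
`t • A + t ^ 2 • B` vanishes identically as soon as it vanishes at `1` and at a scalar `a` for
which `a * (a - 1)` is regular.
-/

section Quadratic

variable {R M N : Type*} [CommRing R] [AddCommGroup M] [Module R M] [AddCommGroup N] [Module R N]

theorem forall_smul_add_sq_smul_eq_zero_iff {a : R} (ha : IsSMulRegular N (a * (a - 1)))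
    {x y : N} : (∀ t : R, t • x + t ^ 2 • y = 0) ↔ x = 0 ∧ y = 0 := by
  refine ⟨fun h ↦ ?_, fun ⟨hx, hy⟩ t ↦ by simp [hx, hy]⟩
  have h_one : x + y = 0 := by simpa using h 1
  have hy : y = 0 := ha.right_eq_zero_of_smul <| calc
    (a * (a - 1)) • y = (a • x + a ^ 2 • y) - a • (x + y) := by module
    _ = 0 := by rw [h a, h_one, smul_zero, sub_zero]
  exact ⟨by simpa [hy] using h_one, hy⟩

theorem quadraticMap_add_smul (Q : QuadraticMap R M N) (x y : M) (t : R) :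
    Q (x + t • y) = Q x + (t • QuadraticMap.polar Q x y + t ^ 2 • Q y) := by
  rw [QuadraticMap.map_add Q, QuadraticMap.polar_smul_right, QuadraticMap.map_smul, ← pow_two]
  abel

theorem forall_quadraticMap_add_smul_eq_zero_iff {a : R} (ha : IsSMulRegular N (a * (a - 1)))
    (Q : QuadraticMap R M N) {x : M} (hx : Q x = 0) (y : M) :
    (∀ t : R, Q (x + t • y) = 0) ↔ QuadraticMap.polar Q x y = 0 ∧ Q y = 0 := by
  simp only [quadraticMap_add_smul, hx, zero_add, forall_smul_add_sq_smul_eq_zero_iff ha]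

theorem isSMulRegular_linearMap {a : R} (ha : IsSMulRegular N a) :
    IsSMulRegular (M →ₗ[R] N) a :=
  fun _ _ h ↦ LinearMap.ext fun x ↦ ha (LinearMap.congr_fun h x)

end Quadratic

section RotaBaxter

variable {R g V : Type*} [CommRing R] [AddCommGroup g] [Module R g] [AddCommGroup V] [Module R V]

/-- `T` is a relative Rota-Baxter operator, for an arbitrary bilinear product `br` on `g` and
arbitrary linear left and right actions `ρL`, `ρR` of `g` on `V`. -/
def IsRelRotaBaxter (br : g →ₗ[R] g →ₗ[R] g) (ρL ρR : g →ₗ[R] Module.End R V)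
    (T : V →ₗ[R] g) : Prop :=
  ∀ u v : V, br (T u) (T v) = T (ρL (T u) v + ρR (T v) u)

/-- The product `[u, v]_T = ρL(Tu)v + ρR(Tv)u` which `T` induces on `V`, bundled as a linear
function of `T`. -/
def inducedProduct (ρL ρR : g →ₗ[R] Module.End R V) : (V →ₗ[R] g) →ₗ[R] V →ₗ[R] V →ₗ[R] V :=
  ρL.compRight R + LinearMap.lflip.toLinearMap ∘ₗ ρR.compRight R

/-- The bilinear map `(S, T) ↦ ((u, v) ↦ [Su, Tv] - S([u, v]_T))`, whose diagonal measures the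
failure of the relative Rota-Baxter identity. -/
def rotaBaxterDefect (br : g →ₗ[R] g →ₗ[R] g) (ρL ρR : g →ₗ[R] Module.End R V) :
    LinearMap.BilinMap R (V →ₗ[R] g) (V →ₗ[R] V →ₗ[R] g) :=
  LinearMap.mk₂ R (fun S T ↦ br.compl₁₂ S T - (inducedProduct ρL ρR T).compr₂ S)
    (fun _ _ _ ↦ by ext; simp; abel)
    (fun _ _ _ ↦ by ext; simp [smul_sub])
    (fun _ _ _ ↦ by ext; simp; abel)
    (fun _ _ _ ↦ by ext; simp [smul_sub])

variable (br : g →ₗ[R] g →ₗ[R] g) (ρL ρR : g →ₗ[R] Module.End R V)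

theorem rotaBaxterDefect_apply (S T : V →ₗ[R] g) (u v : V) :
    rotaBaxterDefect br ρL ρR S T u v = br (S u) (T v) - S (ρL (T u) v + ρR (T v) u) :=
  rfl

theorem isRelRotaBaxter_iff_toQuadraticMap_eq_zero (T : V →ₗ[R] g) :
    IsRelRotaBaxter br ρL ρR T ↔ (rotaBaxterDefect br ρL ρR).toQuadraticMap T = 0 := by
  simp only [IsRelRotaBaxter, LinearMap.BilinMap.toQuadraticMap_apply, LinearMap.ext_iff₂,
    rotaBaxterDefect_apply, LinearMap.zero_apply, sub_eq_zero]

theorem polar_rotaBaxterDefect_eq_zero_iff (S T : V →ₗ[R] g) :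
    QuadraticMap.polar (rotaBaxterDefect br ρL ρR).toQuadraticMap S T = 0 ↔
      ∀ u v : V, br (S u) (T v) + br (T u) (S v) =
        S (ρL (T u) v + ρR (T v) u) + T (ρL (S u) v + ρR (S v) u) := by
  simp only [LinearMap.BilinMap.polar_toQuadraticMap, LinearMap.ext_iff₂, LinearMap.add_apply,
    rotaBaxterDefect_apply, LinearMap.zero_apply, sub_add_sub_comm, sub_eq_zero]

theorem linear_deformation_iff_general {a : R} (ha : IsSMulRegular g (a * (a - 1)))
    {T : V →ₗ[R] g} (hT : IsRelRotaBaxter br ρL ρR T) (𝔗 : V →ₗ[R] g) :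
    (∀ t : R, IsRelRotaBaxter br ρL ρR (T + t • 𝔗)) ↔
      (∀ u v : V, br (T u) (𝔗 v) + br (𝔗 u) (T v) =
        T (ρL (𝔗 u) v + ρR (𝔗 v) u) + 𝔗 (ρL (T u) v + ρR (T v) u)) ∧
      IsRelRotaBaxter br ρL ρR 𝔗 := by
  rw [isRelRotaBaxter_iff_toQuadraticMap_eq_zero] at hT
  simp only [isRelRotaBaxter_iff_toQuadraticMap_eq_zero, ← polar_rotaBaxterDefect_eq_zero_iff]
  exact forall_quadraticMap_add_smul_eq_zero_iff
    (isSMulRegular_linearMap (isSMulRegular_linearMap ha)) _ hT 𝔗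

end RotaBaxter

/-- `T + t𝔗` is a relative Rota-Baxter operator for every `t ∈ K` if and only
if equations (14) and (15) hold. -/
theorem linear_deformation_iff
    {K : Type*} [Field K] [CharZero K]
    {g V : Type*} [AddCommGroup g] [Module K g] [AddCommGroup V] [Module K V]
    (br : g →ₗ[K] g →ₗ[K] g)
    (leib : ∀ x y z : g, br x (br y z) = br (br x y) z + br y (br x z))
    (ρL ρR : g →ₗ[K] Module.End K V)
    (hL : ∀ x y : g, ρL (br x y) = ρL x * ρL y - ρL y * ρL x)
    (hR : ∀ x y : g, ρR (br x y) = ρL x * ρR y - ρR y * ρL x)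
    (hRL : ∀ x y : g, ρR y * ρL x = -(ρR y * ρR x))
    (T : V →ₗ[K] g)
    (hT : ∀ u v : V, br (T u) (T v) = T (ρL (T u) v + ρR (T v) u))
    (𝔗 : V →ₗ[K] g) :
    (∀ t : K, ∀ u v : V,
        br ((T + t • 𝔗) u) ((T + t • 𝔗) v) =
          (T + t • 𝔗) (ρL ((T + t • 𝔗) u) v + ρR ((T + t • 𝔗) v) u)) ↔
    ((∀ u v : V,
        br (T u) (𝔗 v) + br (𝔗 u) (T v) =
          T (ρL (𝔗 u) v + ρR (𝔗 v) u) + 𝔗 (ρL (T u) v + ρR (T v) u)) ∧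
      (∀ u v : V, br (𝔗 u) (𝔗 v) = 𝔗 (ρL (𝔗 u) v + ρR (𝔗 v) u))) :=
  linear_deformation_iff_general br ρL ρR (a := 2) (.of_ne_zero (by norm_num)) hT 𝔗
end

section
/- Let T be a relative Rota-Baxter operator on a Leibniz algebra (g,[·,·]_g) with respect to a representation (V; ρL, ρR), let 𝔗₁, 𝔗₂ : V → g be linear maps such that T + t𝔗₁ and T + t𝔗₂ are relative Rota-Baxter operators for every t ∈ K, and let x ∈ g be such that for every t ∈ K the pair (Id_g + tL_x, Id_V + tρL(x)) is a homomorphism from T + t𝔗₂ to T + t𝔗₁. Then: (a) [[x,y]_g,[x,z]_g]_g = 0 for all y,z ∈ g; (b) 𝔗₁(ρL(x)u) = [x, 𝔗₂(u)]_g for all u ∈ V; (c) ρL([x,y]_g)∘ρL(x) = 0 for all y ∈ g; (d) ρR([x,y]_g)∘ρL(x) = 0 for all y ∈ g. -/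
/-!
Every homomorphism condition for `(Id + tL_x, Id + tρL(x))` is a polynomial identity of degree at
most two in `t` whose constant term cancels, and the claims say that its quadratic coefficient
vanishes. An identity `t • a + t² • b = 0` gives `a = -b` at `t = 1`, hence `(t² - t) • b = 0` for
all `t`, and so `b = 0` as soon as some `c² - c` is invertible.
-/

theorem eq_zero_of_forall_smul_add_sq_smul_eq_zero
    {R M : Type*} [Ring R] [AddCommGroup M] [Module R M] {c : R} (hc : IsUnit (c * (c - 1)))
    {a b : M} (h : ∀ t : R, t • a + t ^ 2 • b = 0) : b = 0 := by
  have ha : a = -b := eq_neg_of_add_eq_zero_left (by simpa using h 1)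
  refine hc.smul_eq_zero.mp ?_
  calc (c * (c - 1)) • b = c • -b + c ^ 2 • b := by
        rw [mul_sub_one, sub_smul, smul_neg, sq, neg_add_eq_sub]
    _ = 0 := ha ▸ h c

section CommRing

variable {K : Type*} [CommRing K] {c : K}

theorem apply_apply_eq_zero_of_forall_id_add_smul
    {M N P : Type*} [AddCommGroup M] [Module K M] [AddCommGroup N] [Module K N]
    [AddCommGroup P] [Module K P] (hc : IsUnit (c * (c - 1)))
    {f : M →ₗ[K] N →ₗ[K] P} {A : Module.End K M} {B : Module.End K N} {C : Module.End K P}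
    (h : ∀ (t : K) (m : M) (n : N), (LinearMap.id + t • C : P →ₗ[K] P) (f m n) =
      f ((LinearMap.id + t • A : M →ₗ[K] M) m) ((LinearMap.id + t • B : N →ₗ[K] N) n))
    (m : M) (n : N) : f (A m) (B n) = 0 := by
  refine eq_zero_of_forall_smul_add_sq_smul_eq_zero hc
    (a := f (A m) n + f m (B n) - C (f m n)) fun t => ?_
  have ht := h t m n
  simp only [LinearMap.add_apply, LinearMap.smul_apply, LinearMap.id_apply, map_add,
    map_smul] at ht
  linear_combination (norm := module) -ht

theorem apply_apply_eq_of_forall_add_smul_id_add_smul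
    {M N : Type*} [AddCommGroup M] [Module K M] [AddCommGroup N] [Module K N]
    (hc : IsUnit (c * (c - 1))) {T S₁ S₂ : M →ₗ[K] N} {A : Module.End K M} {B : Module.End K N}
    (h : ∀ (t : K) (m : M), (T + t • S₁) ((LinearMap.id + t • A : M →ₗ[K] M) m) =
      (LinearMap.id + t • B : N →ₗ[K] N) ((T + t • S₂) m))
    (m : M) : S₁ (A m) = B (S₂ m) := by
  refine sub_eq_zero.mp <| eq_zero_of_forall_smul_add_sq_smul_eq_zero hc
    (a := T (A m) + S₁ m - B (T m) - S₂ m) fun t => ?_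
  have ht := h t m
  simp only [LinearMap.add_apply, LinearMap.smul_apply, LinearMap.id_apply, map_add,
    map_smul] at ht
  linear_combination (norm := module) ht

theorem conditions_from_equivalence_of_linear_deformations_general
    {g V : Type*} [AddCommGroup g] [Module K g] [AddCommGroup V] [Module K V]
    (hc : IsUnit (c * (c - 1))) (br : g →ₗ[K] g →ₗ[K] g) (ρL ρR : g →ₗ[K] Module.End K V)
    (T 𝔗₁ 𝔗₂ : V →ₗ[K] g) (x : g)
    (hhom_alg : ∀ (t : K) (y z : g), (LinearMap.id + t • br x : g →ₗ[K] g) (br y z) =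
      br ((LinearMap.id + t • br x : g →ₗ[K] g) y) ((LinearMap.id + t • br x : g →ₗ[K] g) z))
    (hhom_comm : ∀ (t : K) (u : V),
      (T + t • 𝔗₁) ((LinearMap.id + t • ρL x : V →ₗ[K] V) u) =
        (LinearMap.id + t • br x : g →ₗ[K] g) ((T + t • 𝔗₂) u))
    (hhom_L : ∀ (t : K) (y : g) (u : V), (LinearMap.id + t • ρL x : V →ₗ[K] V) (ρL y u) =
      ρL ((LinearMap.id + t • br x : g →ₗ[K] g) y) ((LinearMap.id + t • ρL x : V →ₗ[K] V) u))
    (hhom_R : ∀ (t : K) (y : g) (u : V), (LinearMap.id + t • ρL x : V →ₗ[K] V) (ρR y u) =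
      ρR ((LinearMap.id + t • br x : g →ₗ[K] g) y) ((LinearMap.id + t • ρL x : V →ₗ[K] V) u)) :
    (∀ y z : g, br (br x y) (br x z) = 0) ∧
    (∀ u : V, 𝔗₁ (ρL x u) = br x (𝔗₂ u)) ∧
    (∀ y : g, ρL (br x y) * ρL x = 0) ∧
    (∀ y : g, ρR (br x y) * ρL x = 0) :=
  ⟨apply_apply_eq_zero_of_forall_id_add_smul hc hhom_alg,
    apply_apply_eq_of_forall_add_smul_id_add_smul hc hhom_comm,
    fun y => LinearMap.ext (apply_apply_eq_zero_of_forall_id_add_smul hc hhom_L y),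
    fun y => LinearMap.ext (apply_apply_eq_zero_of_forall_id_add_smul hc hhom_R y)⟩

end CommRing

/-- If `(Id + tL_x, Id + tρL(x))` is a homomorphism from `T + t𝔗₂` to
`T + t𝔗₁` for every `t`, then the four displayed conditions (16)-(20) hold. -/
theorem conditions_from_equivalence_of_linear_deformations
    {K : Type*} [Field K] [CharZero K]
    {g V : Type*} [AddCommGroup g] [Module K g] [AddCommGroup V] [Module K V]
    (br : g →ₗ[K] g →ₗ[K] g)
    (leib : ∀ x y z : g, br x (br y z) = br (br x y) z + br y (br x z))
    (ρL ρR : g →ₗ[K] Module.End K V)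
    (hL : ∀ x y : g, ρL (br x y) = ρL x * ρL y - ρL y * ρL x)
    (hR : ∀ x y : g, ρR (br x y) = ρL x * ρR y - ρR y * ρL x)
    (hRL : ∀ x y : g, ρR y * ρL x = -(ρR y * ρR x))
    (T : V →ₗ[K] g)
    (hT : ∀ u v : V, br (T u) (T v) = T (ρL (T u) v + ρR (T v) u))
    (𝔗₁ 𝔗₂ : V →ₗ[K] g)
    (hdef₁ : ∀ t : K, ∀ u v : V,
        br ((T + t • 𝔗₁) u) ((T + t • 𝔗₁) v) =
          (T + t • 𝔗₁) (ρL ((T + t • 𝔗₁) u) v + ρR ((T + t • 𝔗₁) v) u))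
    (hdef₂ : ∀ t : K, ∀ u v : V,
        br ((T + t • 𝔗₂) u) ((T + t • 𝔗₂) v) =
          (T + t • 𝔗₂) (ρL ((T + t • 𝔗₂) u) v + ρR ((T + t • 𝔗₂) v) u))
    (x : g)
    (hhom_alg : ∀ t : K, ∀ y z : g,
        ((LinearMap.id + t • br x : g →ₗ[K] g)) (br y z) =
          br (((LinearMap.id + t • br x : g →ₗ[K] g)) y) (((LinearMap.id + t • br x : g →ₗ[K] g)) z))
    (hhom_comm : ∀ t : K, ∀ u : V,
        (T + t • 𝔗₁) (((LinearMap.id + t • ρL x : V →ₗ[K] V)) u) =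
          ((LinearMap.id + t • br x : g →ₗ[K] g)) ((T + t • 𝔗₂) u))
    (hhom_L : ∀ t : K, ∀ (y : g) (u : V),
        ((LinearMap.id + t • ρL x : V →ₗ[K] V)) (ρL y u) =
          ρL (((LinearMap.id + t • br x : g →ₗ[K] g)) y) (((LinearMap.id + t • ρL x : V →ₗ[K] V)) u))
    (hhom_R : ∀ t : K, ∀ (y : g) (u : V),
        ((LinearMap.id + t • ρL x : V →ₗ[K] V)) (ρR y u) =
          ρR (((LinearMap.id + t • br x : g →ₗ[K] g)) y) (((LinearMap.id + t • ρL x : V →ₗ[K] V)) u)) :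
    (∀ y z : g, br (br x y) (br x z) = 0) ∧
    (∀ u : V, 𝔗₁ (ρL x u) = br x (𝔗₂ u)) ∧
    (∀ y : g, ρL (br x y) * ρL x = 0) ∧
    (∀ y : g, ρR (br x y) * ρL x = 0) :=
  conditions_from_equivalence_of_linear_deformations_general (c := 2) (by norm_num)
    br ρL ρR T 𝔗₁ 𝔗₂ x hhom_alg hhom_comm hhom_L hhom_R
end

section
/- Let T be a relative Rota-Baxter operator on a Leibniz algebra (g,[·,·]_g) with respect to a representation (V; ρL, ρR), and let x ∈ g be a Nijenhuis element associated to T. Then ρL(x) is a Nijenhuis operator on the Leibniz algebra (V,[·,·]_T); that is, for all u,v ∈ V: [ρL(x)u, ρL(x)v]_T = ρL(x)([ρL(x)u, v]_T + [u, ρL(x)v]_T − ρL(x)[u,v]_T). -/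
/-!
Each of the two summands of `[u, v]_T = ρL (T u) v + ρR (T v) u` satisfies the Nijenhuis identity
on its own. Write `D = ρL x` and `δ = [x, ·]`, and let `ρ` be `ρL` or `ρR`; in both cases
`ρ (δ y) = ⁅D, ρ y⁆`. Since `δ` kills `T (D u) - δ (T u)`, the operator `D` commutes with
`ρ (T (D u)) - ⁅D, ρ (T u)⁆`. Applying this commutation and `⁅D, ρ (T u)⁆ * D = 0` to `v` gives
the identity for `(u, v) ↦ ρ (T u) v`.
-/

/-- `N` is a Nijenhuis operator for the binary operation `b` on an additive group. Bilinearity of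
`b` and additivity of `N` are not part of the definition, so that it applies to each summand of a
bracket separately. -/
def IsNijenhuisOperator {W : Type*} [AddGroup W] (b : W → W → W) (N : W → W) : Prop :=
  ∀ u v, b (N u) (N v) = N (b (N u) v + b u (N v) - N (b u v))

namespace IsNijenhuisOperator

variable {W : Type*} [AddCommGroup W] {b c : W → W → W}

theorem swap {N : W → W} (hb : IsNijenhuisOperator b N) :
    IsNijenhuisOperator (Function.swap b) N := fun u v => by
  simp only [Function.swap]
  rw [hb v u, add_comm (b (N v) u)]

theorem add {F : Type*} [FunLike F W W] [AddMonoidHomClass F W W] {N : F}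
    (hb : IsNijenhuisOperator b N) (hc : IsNijenhuisOperator c N) :
    IsNijenhuisOperator (b + c) N := fun u v => by
  simp only [Pi.add_apply]
  rw [hb u v, hc u v, ← map_add, map_add N (b u v)]
  congr 1
  abel

end IsNijenhuisOperator

theorem mul_eq_mul_add_sub_of_commute_sub_lie {A : Type*} [NonUnitalNonAssocRing A] {a b d : A}
    (hcomm : Commute d (a - ⁅d, b⁆)) (hmul : ⁅d, b⁆ * d = 0) :
    a * d = d * (a + b * d - d * b) :=
  calc
    a * d = (a - ⁅d, b⁆) * d := by rw [sub_mul, hmul, sub_zero]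
    _ = d * (a - ⁅d, b⁆) := hcomm.symm.eq
    _ = d * (a + b * d - d * b) := by rw [Ring.lie_def, sub_sub_eq_add_sub]

section Intertwining

variable {K g V : Type*} [CommRing K] [AddCommGroup g] [Module K g] [AddCommGroup V] [Module K V]
  {δ : Module.End K g} {D : Module.End K V} {T : V → g}

theorem isNijenhuisOperator_of_intertwining {ρ : g →ₗ[K] Module.End K V}
    (hρ : ∀ y, ρ (δ y) = ⁅D, ρ y⁆) (hD : ∀ y, ρ (δ y) * D = 0)
    (hT : ∀ u, δ (T (D u) - δ (T u)) = 0) :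
    IsNijenhuisOperator (fun u v => ρ (T u) v) D := fun u v => by
  have hcomm : Commute D (ρ (T (D u)) - ⁅D, ρ (T u)⁆) := by
    rw [commute_iff_lie_eq, ← hρ, ← map_sub, ← hρ, hT, map_zero]
  have hmul : ⁅D, ρ (T u)⁆ * D = 0 := by rw [← hρ, hD]
  exact LinearMap.congr_fun (mul_eq_mul_add_sub_of_commute_sub_lie hcomm hmul) v

theorem nijenhuis_element_gives_nijenhuis_operator_general {ρL ρR : g →ₗ[K] Module.End K V}
    (hL : ∀ y, ρL (δ y) = ⁅D, ρL y⁆) (hR : ∀ y, ρR (δ y) = ⁅D, ρR y⁆)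
    (hLD : ∀ y, ρL (δ y) * D = 0) (hRD : ∀ y, ρR (δ y) * D = 0)
    (hT : ∀ u, δ (T (D u) - δ (T u)) = 0) :
    IsNijenhuisOperator (fun u v => ρL (T u) v + ρR (T v) u) D :=
  (isNijenhuisOperator_of_intertwining hL hLD hT).add
    (isNijenhuisOperator_of_intertwining hR hRD hT).swap

end Intertwining

/-- If `x` is a Nijenhuis element associated to a relative Rota-Baxter
operator `T`, then `ρL(x)` is a Nijenhuis operator on the Leibniz algebra `(V,[·,·]_T)`. -/
theorem nijenhuis_element_gives_nijenhuis_operator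
    {K : Type*} [Field K] [CharZero K]
    {g V : Type*} [AddCommGroup g] [Module K g] [AddCommGroup V] [Module K V]
    (br : g →ₗ[K] g →ₗ[K] g)
    (leib : ∀ x y z : g, br x (br y z) = br (br x y) z + br y (br x z))
    (ρL ρR : g →ₗ[K] Module.End K V)
    (hL : ∀ x y : g, ρL (br x y) = ρL x * ρL y - ρL y * ρL x)
    (hR : ∀ x y : g, ρR (br x y) = ρL x * ρR y - ρR y * ρL x)
    (hRL : ∀ x y : g, ρR y * ρL x = -(ρR y * ρR x))
    (T : V →ₗ[K] g)
    (hT : ∀ u v : V, br (T u) (T v) = T (ρL (T u) v + ρR (T v) u))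
    (bT : V → V → V)
    (hbT : ∀ u v : V, bT u v = ρL (T u) v + ρR (T v) u)
    (x : g)
    (hNij1 : ∀ y z : g, br (br x y) (br x z) = 0)
    (hNij2 : ∀ y : g, ρL (br x y) * ρL x = 0)
    (hNij3 : ∀ y : g, ρR (br x y) * ρL x = 0)
    (hNij4 : ∀ u : V, br x (T (ρL x u) - br x (T u)) = 0) :
    ∀ u v : V,
      bT (ρL x u) (ρL x v) =
        ρL x (bT (ρL x u) v + bT u (ρL x v) - ρL x (bT u v)) := by
  obtain rfl : bT = fun u v => ρL (T u) v + ρR (T v) u := funext₂ hbT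
  exact nijenhuis_element_gives_nijenhuis_operator_general (hL x) (hR x) hNij2 hNij3 hNij4
end
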